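/- Let C be a 2-reduced cocommutative dg coalgebra over ℚ and t : C ⇝ ΩC its universal twisting chain. For every left dg ΩC-module M, the counit of the (t^! ⊣ t_*) adjunction, t^! t_* M = ΩC ⊗_t (C ⊗^t M) → M, given by a ⊗ c ⊗ m ↦ ε(c)·(a·m), is a quasi-isomorphism of ΩC-modules, natural in M. -/

import Mathlib

open scoped TensorProduct

noncomputable section

/-- A homologically graded differential graded `ℚ`-vector space (chain complex of
`ℚ`-vector spaces presented as a graded module with a degree `-1` square-zero differential). -/
structure DGVect : Type 1 where
  carrier : Type
  [isAddCommGroup : AddCommGroup carrier]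
  [isModule : Module ℚ carrier]
  grading : ℤ → Submodule ℚ carrier
  [isDecomp : DirectSum.Decomposition grading]
  d : carrier →ₗ[ℚ] carrier
  d_mem : ∀ (n : ℤ), ∀ x ∈ grading n, d x ∈ grading (n - 1)
  d_sq : d.comp d = 0

attribute [instance] DGVect.isAddCommGroup DGVect.isModule DGVect.isDecomp

/-- The operator acting on the degree `n` graded component by `(-1)^(k*n)`. -/
def signOpOf {V : Type} [AddCommGroup V] [Module ℚ V] (g : ℤ → Submodule ℚ V)
    [DirectSum.Decomposition g] (k : ℤ) : V →ₗ[ℚ] V :=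
  (DirectSum.toModule ℚ ℤ V fun n => ((-1 : ℚ) ^ (k * n)) • (g n).subtype).comp
    (DirectSum.decomposeLinearEquiv g).toLinearMap

/-- The Koszul parity operator, acting by `(-1)^n` in degree `n`. -/
def parityOf {V : Type} [AddCommGroup V] [Module ℚ V] (g : ℤ → Submodule ℚ V)
    [DirectSum.Decomposition g] : V →ₗ[ℚ] V := signOpOf g 1

def DGVect.parity (V : DGVect) : V.carrier →ₗ[ℚ] V.carrier := parityOf V.grading

/-- A graded object is bounded below if it vanishes in all sufficiently negative degrees. -/
def DGVect.BoundedBelow (V : DGVect) : Prop := ∃ b : ℤ, ∀ n : ℤ, n < b → V.grading n = ⊥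

/-- The Koszul signed braiding `v ⊗ w ↦ (-1)^{|v||w|} w ⊗ v` of graded vector spaces. -/
def kSwapOf {V W : Type} [AddCommGroup V] [Module ℚ V] [AddCommGroup W] [Module ℚ W]
    (gV : ℤ → Submodule ℚ V) (gW : ℤ → Submodule ℚ W)
    [DirectSum.Decomposition gV] [DirectSum.Decomposition gW] :
    V ⊗[ℚ] W →ₗ[ℚ] W ⊗[ℚ] V :=
  TensorProduct.lift
    ((DirectSum.toModule ℚ ℤ (W →ₗ[ℚ] W ⊗[ℚ] V) (fun i =>
        (((DirectSum.toModule ℚ ℤ (V →ₗ[ℚ] W ⊗[ℚ] V) (fun j =>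
              ((-1 : ℚ) ^ (i * j)) • ((TensorProduct.mk ℚ W V).comp (gW j).subtype))).comp
            (DirectSum.decomposeLinearEquiv gW).toLinearMap).flip).comp
          (gV i).subtype)).comp
      (DirectSum.decomposeLinearEquiv gV).toLinearMap)

/-- The degree `n` part of the tensor product grading:
the span of the homogeneous tensors of total degree `n`. -/
def tensorGrading {V W : Type} [AddCommGroup V] [Module ℚ V] [AddCommGroup W] [Module ℚ W]
    (gV : ℤ → Submodule ℚ V) (gW : ℤ → Submodule ℚ W) (n : ℤ) : Submodule ℚ (V ⊗[ℚ] W) :=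
  ⨆ p : {p : ℤ × ℤ // p.1 + p.2 = n},
    LinearMap.range (TensorProduct.map (gV p.1.1).subtype (gW p.1.2).subtype)

/-- `f` is a quasi-isomorphism from the complex `(V, dV)` to the complex `(W, dW)`:
it induces a bijection on homology (`ker d / im d`). -/
def IsQuasiIso {V W : Type} [AddCommGroup V] [Module ℚ V] [AddCommGroup W] [Module ℚ W]
    (dV : V →ₗ[ℚ] V) (dW : W →ₗ[ℚ] W) (f : V →ₗ[ℚ] W) : Prop :=
  (∀ x : V, dV x = 0 → (∃ y, f x = dW y) → ∃ z, x = dV z) ∧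
  (∀ w : W, dW w = 0 → ∃ x, dV x = 0 ∧ ∃ y, w - f x = dW y)

/-- A differential graded algebra over `ℚ`. -/
structure DGAlgebra extends DGVect where
  mul : carrier →ₗ[ℚ] carrier →ₗ[ℚ] carrier
  one : carrier
  one_mem : one ∈ grading 0
  mul_mem : ∀ (i j : ℤ) (x y : carrier), x ∈ grading i → y ∈ grading j →
    mul x y ∈ grading (i + j)
  mul_assoc' : ∀ x y z : carrier, mul (mul x y) z = mul x (mul y z)
  one_mul' : ∀ x : carrier, mul one x = x
  mul_one' : ∀ x : carrier, mul x one = x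
  leibniz : ∀ (i : ℤ) (x y : carrier), x ∈ grading i →
    d (mul x y) = mul (d x) y + ((-1 : ℚ) ^ i) • mul x (d y)

/-- The multiplication of a dg algebra as a map out of the tensor product. -/
def DGAlgebra.mulMap (A : DGAlgebra) : A.carrier ⊗[ℚ] A.carrier →ₗ[ℚ] A.carrier :=
  TensorProduct.lift A.mul

/-- A dg algebra is connective if it is concentrated in non-negative degrees. -/
def DGAlgebra.Connective (A : DGAlgebra) : Prop := ∀ n : ℤ, n < 0 → A.grading n = ⊥

/-- A (coassociative counital) differential graded coalgebra over `ℚ`,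
non-negatively graded. -/
structure DGCoalgebra extends DGVect where
  comul : carrier →ₗ[ℚ] carrier ⊗[ℚ] carrier
  counit : carrier →ₗ[ℚ] ℚ
  nonneg : ∀ n : ℤ, n < 0 → grading n = ⊥
  comul_mem : ∀ (n : ℤ), ∀ x ∈ grading n, comul x ∈ tensorGrading grading grading n
  counit_zero : ∀ (n : ℤ), n ≠ 0 → ∀ x ∈ grading n, counit x = 0
  coassoc : (TensorProduct.assoc ℚ carrier carrier carrier).toLinearMap.comp
      ((TensorProduct.map comul LinearMap.id).comp comul)
      = (TensorProduct.map LinearMap.id comul).comp comul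
  counit_comul_left : (TensorProduct.lid ℚ carrier).toLinearMap.comp
      ((TensorProduct.map counit LinearMap.id).comp comul) = LinearMap.id
  counit_comul_right : (TensorProduct.rid ℚ carrier).toLinearMap.comp
      ((TensorProduct.map LinearMap.id counit).comp comul) = LinearMap.id
  comul_chain : comul.comp d
      = (TensorProduct.map d LinearMap.id + TensorProduct.map (parityOf grading) d).comp comul
  counit_chain : counit.comp d = 0

/-- Cocommutativity: the comultiplication is invariant under the Koszul signed twist. -/
def DGCoalgebra.Cocomm (C : DGCoalgebra) : Prop :=
  (kSwapOf C.grading C.grading).comp C.comul = C.comul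

/-- A coaugmented dg coalgebra: a dg coalgebra with a coaugmentation `η : ℚ → C`,
recorded by the grouplike element `one = η 1` in degree `0`. -/
structure CoaugDGCoalgebra extends DGCoalgebra where
  one : carrier
  one_mem : one ∈ grading 0
  counit_one : counit one = 1
  comul_one : comul one = one ⊗ₜ[ℚ] one

/-- A coaugmented dg coalgebra is 2-reduced if `C₀ = ℚ` (spanned by the coaugmentation)
and `C₁ = 0`. -/
def CoaugDGCoalgebra.TwoReduced (C : CoaugDGCoalgebra) : Prop :=
  C.grading 0 = Submodule.span ℚ {C.one} ∧ C.grading 1 = ⊥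

/-- A twisting chain `τ : C ⇝ A`: a degree `-1` linear map satisfying
`d(τc) = -τ(dc) - (-1)^{|c₍₀₎|} τ(c₍₀₎)·τ(c₍₁₎)`. -/
structure TwistingChain (C : DGCoalgebra) (A : DGAlgebra) where
  toFun : C.carrier →ₗ[ℚ] A.carrier
  mem : ∀ (n : ℤ), ∀ x ∈ C.grading n, toFun x ∈ A.grading (n - 1)
  twist : A.d.comp toFun + toFun.comp C.d
      + A.mulMap.comp ((TensorProduct.map (toFun.comp (parityOf C.grading)) toFun).comp C.comul)
      = 0

/-- A left dg module over a dg algebra. -/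
structure DGModule (A : DGAlgebra) extends DGVect where
  smul : A.carrier →ₗ[ℚ] carrier →ₗ[ℚ] carrier
  smul_mem : ∀ (i j : ℤ) (a : A.carrier) (x : carrier), a ∈ A.grading i → x ∈ grading j →
    smul a x ∈ grading (i + j)
  one_smul' : ∀ x : carrier, smul A.one x = x
  mul_smul' : ∀ (a b : A.carrier) (x : carrier), smul (A.mul a b) x = smul a (smul b x)
  leibniz : ∀ (i : ℤ) (a : A.carrier) (x : carrier), a ∈ A.grading i →
    d (smul a x) = smul (A.d a) x + ((-1 : ℚ) ^ i) • smul a (d x)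

/-- The action of a dg module as a map out of the tensor product. -/
def DGModule.actionMap {A : DGAlgebra} (M : DGModule A) :
    A.carrier ⊗[ℚ] M.carrier →ₗ[ℚ] M.carrier := TensorProduct.lift M.smul

/-- A left dg comodule over a dg coalgebra. -/
structure DGComodule (C : DGCoalgebra) extends DGVect where
  coact : carrier →ₗ[ℚ] C.carrier ⊗[ℚ] carrier
  coact_mem : ∀ (n : ℤ), ∀ x ∈ grading n, coact x ∈ tensorGrading C.grading grading n
  coassoc : (TensorProduct.assoc ℚ C.carrier C.carrier carrier).toLinearMap.comp
      ((TensorProduct.map C.comul LinearMap.id).comp coact)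
      = (TensorProduct.map LinearMap.id coact).comp coact
  counit_coact : (TensorProduct.lid ℚ carrier).toLinearMap.comp
      ((TensorProduct.map C.counit LinearMap.id).comp coact) = LinearMap.id
  coact_chain : coact.comp d
      = (TensorProduct.map C.d LinearMap.id + TensorProduct.map (parityOf C.grading) d).comp coact

/-- Morphisms of dg modules: degree `0` graded chain maps commuting with the action. -/
def IsModuleHom (A : DGAlgebra) (M M' : DGModule A)
    (g : M.carrier →ₗ[ℚ] M'.carrier) : Prop :=
  (∀ (n : ℤ), ∀ x ∈ M.grading n, g x ∈ M'.grading n) ∧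
  g.comp M.d = M'.d.comp g ∧
  g.comp M.actionMap = M'.actionMap.comp (TensorProduct.map LinearMap.id g)

/-- Morphisms of dg comodules: degree `0` graded chain maps commuting with the coaction. -/
def IsComoduleHom (C : DGCoalgebra) (N N' : DGComodule C)
    (f : N.carrier →ₗ[ℚ] N'.carrier) : Prop :=
  (∀ (n : ℤ), ∀ x ∈ N.grading n, f x ∈ N'.grading n) ∧
  f.comp N.d = N'.d.comp f ∧
  (TensorProduct.map LinearMap.id f).comp N.coact = N'.coact.comp f

/-- The `A`-action on a twisted extension `A ⊗_τ N`: multiplication on the first factor. -/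
def extAction (A : DGAlgebra) (N : Type) [AddCommGroup N] [Module ℚ N] :
    A.carrier ⊗[ℚ] (A.carrier ⊗[ℚ] N) →ₗ[ℚ] A.carrier ⊗[ℚ] N :=
  (TensorProduct.map A.mulMap LinearMap.id).comp
    (TensorProduct.assoc ℚ A.carrier A.carrier N).symm.toLinearMap

/-- The differential of the twisted extension `A ⊗_τ N`:
`d(a ⊗ n) = da ⊗ n + (-1)^{|a|} a ⊗ dn - (-1)^{|a|} a·τ(n₍₀₎) ⊗ n₍₁₎`
for a `C`-comodule `(N, dN, ρ)`. -/
def extDiff (C : DGCoalgebra) (A : DGAlgebra) (τ : TwistingChain C A)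
    (N : Type) [AddCommGroup N] [Module ℚ N]
    (dN : N →ₗ[ℚ] N) (ρ : N →ₗ[ℚ] C.carrier ⊗[ℚ] N) :
    A.carrier ⊗[ℚ] N →ₗ[ℚ] A.carrier ⊗[ℚ] N :=
  TensorProduct.map A.d LinearMap.id + TensorProduct.map (parityOf A.grading) dN
    - (TensorProduct.map
        (A.mulMap.comp (TensorProduct.map (parityOf A.grading) τ.toFun)) LinearMap.id).comp
        ((TensorProduct.assoc ℚ A.carrier C.carrier N).symm.toLinearMap.comp
          (TensorProduct.map LinearMap.id ρ))

/-- The `C`-coaction on a twisted coextension `C ⊗^τ M`, namely `Δ ⊗ id`. -/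
def coextCoact (C : DGCoalgebra) (M : Type) [AddCommGroup M] [Module ℚ M] :
    C.carrier ⊗[ℚ] M →ₗ[ℚ] C.carrier ⊗[ℚ] (C.carrier ⊗[ℚ] M) :=
  (TensorProduct.assoc ℚ C.carrier C.carrier M).toLinearMap.comp
    (TensorProduct.map C.comul LinearMap.id)

/-- The differential of the twisted coextension `C ⊗^τ M`, expressed in terms of the map
`tact : C ⊗ M → M`, `c ⊗ m ↦ τ(c)·m`:
`d(c ⊗ m) = dc ⊗ m + (-1)^{|c|} c ⊗ dm + (-1)^{|c₍₀₎|} c₍₀₎ ⊗ τ(c₍₁₎)·m`. -/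
def coextDiffFrom (C : DGCoalgebra) (M : Type) [AddCommGroup M] [Module ℚ M]
    (dM : M →ₗ[ℚ] M) (tact : C.carrier ⊗[ℚ] M →ₗ[ℚ] M) :
    C.carrier ⊗[ℚ] M →ₗ[ℚ] C.carrier ⊗[ℚ] M :=
  TensorProduct.map C.d LinearMap.id + TensorProduct.map (parityOf C.grading) dM
    + (TensorProduct.map (parityOf C.grading) tact).comp (coextCoact C M)

/-- The differential of the twisted coextension `C ⊗^τ M` of an `A`-module `(M, dM, act)`. -/
def coextDiff (C : DGCoalgebra) (A : DGAlgebra) (τ : TwistingChain C A)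
    (M : Type) [AddCommGroup M] [Module ℚ M]
    (dM : M →ₗ[ℚ] M) (act : A.carrier ⊗[ℚ] M →ₗ[ℚ] M) :
    C.carrier ⊗[ℚ] M →ₗ[ℚ] C.carrier ⊗[ℚ] M :=
  coextDiffFrom C M dM (act.comp (TensorProduct.map τ.toFun LinearMap.id))

/-- Morphisms of dg algebras. -/
structure DGAlgebraHom (A B : DGAlgebra) where
  toLinearMap : A.carrier →ₗ[ℚ] B.carrier
  mem : ∀ (n : ℤ), ∀ x ∈ A.grading n, toLinearMap x ∈ B.grading n
  chain : toLinearMap.comp A.d = B.d.comp toLinearMap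
  map_one : toLinearMap A.one = B.one
  map_mul : ∀ x y : A.carrier, toLinearMap (A.mul x y) = B.mul (toLinearMap x) (toLinearMap y)

/-- Data exhibiting a dg algebra as the cobar construction `ΩC` of a coaugmented
dg coalgebra `C`, via the universal twisting chain `t : C ⇝ ΩC`:
dg algebra maps `ΩC → A` correspond bijectively to twisting chains `C ⇝ A`
vanishing on the coaugmentation. -/
structure CobarData (C : CoaugDGCoalgebra) where
  alg : DGAlgebra
  t : TwistingChain C.toDGCoalgebra alg
  t_one : t.toFun C.one = 0
  univ : ∀ (A : DGAlgebra) (τ : TwistingChain C.toDGCoalgebra A), τ.toFun C.one = 0 →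
    ∃! F : DGAlgebraHom alg A, F.toLinearMap.comp t.toFun = τ.toFun

/-- A morphism of `C`-comodules is a `t`-equivalence if the induced morphism of twisted
extensions `ΩC ⊗_t N → ΩC ⊗_t M` is a quasi-isomorphism. -/
def IsTEquiv (C : CoaugDGCoalgebra) (Ω : CobarData C) (N M : DGComodule C.toDGCoalgebra)
    (f : N.carrier →ₗ[ℚ] M.carrier) : Prop :=
  IsQuasiIso (extDiff C.toDGCoalgebra Ω.alg Ω.t N.carrier N.d N.coact)
    (extDiff C.toDGCoalgebra Ω.alg Ω.t M.carrier M.d M.coact)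
    (TensorProduct.map LinearMap.id f)

/-! ## Statement 1: the counit of the Koszul adjunction is a quasi-isomorphism -/

/-- The counit `t^! t_* M = ΩC ⊗_t (C ⊗^t M) → M`, `a ⊗ c ⊗ m ↦ ε(c)·(a·m)`. -/
def cobarCounit (C : CoaugDGCoalgebra) (Ω : CobarData C) (M : DGModule Ω.alg) :
    Ω.alg.carrier ⊗[ℚ] (C.carrier ⊗[ℚ] M.carrier) →ₗ[ℚ] M.carrier :=
  M.actionMap.comp (TensorProduct.map LinearMap.id
    ((TensorProduct.lid ℚ M.carrier).toLinearMap.comp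
      (TensorProduct.map C.counit LinearMap.id)))

/-! ### Auxiliary material -/

section Parity

variable {V : Type} [AddCommGroup V] [Module ℚ V] (g : ℤ → Submodule ℚ V)
    [DirectSum.Decomposition g]

theorem toModule_decompose_of_mem {W : Type} [AddCommGroup W] [Module ℚ W]
    (f : ∀ n : ℤ, g n →ₗ[ℚ] W) {n : ℤ} {x : V} (hx : x ∈ g n) :
    (DirectSum.toModule ℚ ℤ W f).comp (DirectSum.decomposeLinearEquiv g).toLinearMap x
      = f n ⟨x, hx⟩ := by
  simp only [LinearMap.comp_apply, LinearEquiv.coe_coe, DirectSum.decomposeLinearEquiv_apply]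
  rw [DirectSum.decompose_of_mem g hx, ← DirectSum.lof_eq_of ℚ, DirectSum.toModule_lof]

theorem parityOf_of_mem {n : ℤ} {x : V} (hx : x ∈ g n) :
    parityOf g x = ((-1 : ℚ) ^ n) • x := by
  unfold parityOf signOpOf
  rw [toModule_decompose_of_mem g _ hx]
  simp

theorem neg_one_zpow_mul_self (n : ℤ) : ((-1 : ℚ) ^ n) * ((-1 : ℚ) ^ n) = 1 := by
  rw [← mul_zpow]; simp

theorem neg_one_zpow_sub_one (n : ℤ) : ((-1 : ℚ) ^ (n - 1)) = - ((-1 : ℚ) ^ n) := by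
  rw [zpow_sub₀ (by norm_num), zpow_one, div_neg, div_one]

theorem parityOf_parityOf (x : V) : parityOf g (parityOf g x) = x := by
  induction x using DirectSum.Decomposition.inductionOn g with
  | zero => simp
  | homogeneous x =>
    rw [parityOf_of_mem g x.2, map_smul, parityOf_of_mem g x.2, smul_smul,
      neg_one_zpow_mul_self, one_smul]
  | add x y hx hy => simp [hx, hy]

/-- A degree `-1` map anticommutes with the parity operator. -/
theorem parityOf_anticomm {W : Type} [AddCommGroup W] [Module ℚ W] (h : ℤ → Submodule ℚ W)
    [DirectSum.Decomposition h] (f : V →ₗ[ℚ] W) (hf : ∀ (n : ℤ), ∀ x ∈ g n, f x ∈ h (n - 1))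
    (x : V) : parityOf h (f x) = - f (parityOf g x) := by
  induction x using DirectSum.Decomposition.inductionOn g with
  | zero => simp
  | homogeneous x =>
    rw [parityOf_of_mem g x.2, parityOf_of_mem h (hf _ _ x.2), map_smul, neg_one_zpow_sub_one,
      neg_smul]
  | add x y hx hy => simp only [map_add, hx, hy]; abel

/-- The map sending `x` in degree `n` to `f x` placed in degree `n - k`. -/
def spread {W : Type} [AddCommGroup W] [Module ℚ W] (k : ℤ) (f : V →ₗ[ℚ] W) :
    V →ₗ[ℚ] (ℤ →₀ W) :=
  (DirectSum.toModule ℚ ℤ (ℤ →₀ W)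
    fun n => ((Finsupp.lsingle (n - k) : W →ₗ[ℚ] ℤ →₀ W).comp f).comp (g n).subtype).comp
    (DirectSum.decomposeLinearEquiv g).toLinearMap

theorem spread_of_mem {W : Type} [AddCommGroup W] [Module ℚ W] (k : ℤ) (f : V →ₗ[ℚ] W)
    {n : ℤ} {x : V} (hx : x ∈ g n) : spread g k f x = Finsupp.single (n - k) (f x) := by
  unfold spread
  rw [toModule_decompose_of_mem g _ hx]
  simp

end Parity

section FinsuppGrading

variable (W : Type) [AddCommGroup W] [Module ℚ W]

/-- The tautological grading on finitely supported functions. -/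
abbrev fsGrading (n : ℤ) : Submodule ℚ (ℤ →₀ W) :=
  LinearMap.range (Finsupp.lsingle n : W →ₗ[ℚ] ℤ →₀ W)

theorem single_mem_fsGrading (n : ℤ) (w : W) : Finsupp.single n w ∈ fsGrading W n := ⟨w, rfl⟩

instance fsDecomposition : DirectSum.Decomposition (fsGrading W) :=
  DirectSum.Decomposition.ofLinearMap (fsGrading W)
    (Finsupp.lsum ℚ fun n => (DirectSum.lof ℚ ℤ (fun n => fsGrading W n) n).comp
      (LinearMap.rangeRestrict (Finsupp.lsingle n : W →ₗ[ℚ] ℤ →₀ W)))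
    (by
      refine LinearMap.ext fun x => ?_
      induction x using Finsupp.induction_linear with
      | zero => simp
      | add x y hx hy => rw [map_add, hx, hy, map_add]
      | single n w =>
        rw [LinearMap.comp_apply, Finsupp.lsum_single, LinearMap.comp_apply,
          DirectSum.coeLinearMap_lof]
        rfl)
    (by
      refine DirectSum.linearMap_ext ℚ fun n => LinearMap.ext fun w => ?_
      obtain ⟨_, w, rfl⟩ := w
      rw [LinearMap.comp_apply, LinearMap.comp_apply, DirectSum.coeLinearMap_lof]
      change Finsupp.lsum ℚ _ (Finsupp.single n w) = _
      rw [Finsupp.lsum_single]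
      rfl)

end FinsuppGrading

section Cofree

variable (B : Type) [Ring B] [Algebra ℚ B]

/-- The product on `B × B` when the left factor sits in degree `i`. -/
def cofMulAux (i : ℤ) : B × B →ₗ[ℚ] B × B →ₗ[ℚ] B × B :=
  LinearMap.mk₂ ℚ (fun p q => (p.1 * q.1, p.2 * q.1 + ((-1 : ℚ) ^ i) • (p.1 * q.2)))
    (by intro p q r; ext <;> simp [add_mul]; abel)
    (by intro c p q; ext <;> simp [smul_comm c])
    (by intro p q r; ext <;> simp [mul_add]; abel)
    (by intro c p q; ext <;> simp [smul_comm c])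

theorem cofMulAux_apply (i : ℤ) (p q : B × B) : cofMulAux B i p q =
    (p.1 * q.1, p.2 * q.1 + ((-1 : ℚ) ^ i) • (p.1 * q.2)) := rfl

/-- The product of the cofree dg algebra on `B`. -/
def cofMul : (ℤ →₀ B × B) →ₗ[ℚ] (ℤ →₀ B × B) →ₗ[ℚ] (ℤ →₀ B × B) :=
  Finsupp.lsum ℚ fun i => LinearMap.flip (Finsupp.lsum ℚ fun j => LinearMap.flip
    ((cofMulAux B i).compr₂ (Finsupp.lsingle (i + j))))

@[simp] theorem cofMul_single (i j : ℤ) (p q : B × B) :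
    cofMul B (Finsupp.single i p) (Finsupp.single j q)
      = Finsupp.single (i + j) (cofMulAux B i p q) := by
  simp [cofMul]

/-- The differential of the cofree dg algebra on `B`. -/
def cofD : (ℤ →₀ B × B) →ₗ[ℚ] (ℤ →₀ B × B) :=
  Finsupp.lsum ℚ fun i => (Finsupp.lsingle (i - 1)).comp
    ((LinearMap.inl ℚ B B).comp (LinearMap.snd ℚ B B))

@[simp] theorem cofD_single (i : ℤ) (p : B × B) :
    cofD B (Finsupp.single i p) = Finsupp.single (i - 1) (p.2, 0) := by
  rw [cofD, Finsupp.lsum_single]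
  simp

/-- The cofree dg algebra on an ungraded algebra `B`. -/
abbrev cofree : DGAlgebra where
  carrier := ℤ →₀ B × B
  grading := fsGrading (B × B)
  d := cofD B
  d_mem := by
    rintro n _ ⟨w, rfl⟩
    simp
  d_sq := by
    refine LinearMap.ext fun x => ?_
    induction x using Finsupp.induction_linear with
    | zero => simp
    | add x y hx hy => rw [map_add, hx, hy, map_add]
    | single n w => simp
  mul := cofMul B
  one := Finsupp.single 0 (1, 0)
  one_mem := single_mem_fsGrading _ _ _
  mul_mem := by
    rintro i j _ _ ⟨v, rfl⟩ ⟨w, rfl⟩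
    simp
  mul_assoc' := by
    intro x y z
    induction x using Finsupp.induction_linear with
    | zero => simp
    | add x x' h h' => simp [h, h']
    | single i p =>
    induction y using Finsupp.induction_linear with
    | zero => simp
    | add x x' h h' => simp [h, h']
    | single j q =>
    induction z using Finsupp.induction_linear with
    | zero => simp
    | add x x' h h' => simp only [map_add, h, h']
    | single k r =>
    simp [cofMulAux_apply, add_assoc, mul_assoc, add_mul, mul_add, zpow_add₀, smul_smul]
  one_mul' := by
    intro x
    induction x using Finsupp.induction_linear with
    | zero => simp
    | add x x' h h' => simp [h, h']
    | single i p => simp [cofMulAux_apply]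
  mul_one' := by
    intro x
    induction x using Finsupp.induction_linear with
    | zero => simp
    | add x x' h h' => simp [h, h']
    | single i p => simp [cofMulAux_apply]
  leibniz := by
    rintro i _ y ⟨p, rfl⟩
    induction y using Finsupp.induction_linear with
    | zero => simp
    | add x x' h h' => simp only [map_add, h, h', smul_add]; abel
    | single j q =>
    have e1 : i - 1 + j = i + j - 1 := by ring
    have e2 : i + (j - 1) = i + j - 1 := by ring
    simp only [Finsupp.lsingle_apply, cofMul_single, cofD_single, cofMulAux_apply, e1, e2,
      Finsupp.smul_single, ← Finsupp.single_add, neg_one_zpow_sub_one]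
    congr 1
    ext <;> simp

/-- Evaluation on the cofree dg algebra. -/
def cofEv : (ℤ →₀ B × B) →ₗ[ℚ] B := Finsupp.lsum ℚ fun _ => LinearMap.fst ℚ B B

@[simp] theorem cofEv_single (i : ℤ) (p : B × B) : cofEv B (Finsupp.single i p) = p.1 := by
  simp [cofEv]

theorem cofEv_mul (x y : ℤ →₀ B × B) : cofEv B (cofMul B x y) = cofEv B x * cofEv B y := by
  induction x using Finsupp.induction_linear with
  | zero => simp
  | add x x' h h' => simp [h, h', add_mul]
  | single i p =>
  induction y using Finsupp.induction_linear with
  | zero => simp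
  | add x x' h h' => simp [h, h', mul_add]
  | single j q => simp [cofMulAux_apply]

end Cofree
section TensorGrading

theorem tensorGrading_le {V W : Type} [AddCommGroup V] [Module ℚ V] [AddCommGroup W] [Module ℚ W]
    (gV : ℤ → Submodule ℚ V) (gW : ℤ → Submodule ℚ W) (n : ℤ) (S : Submodule ℚ (V ⊗[ℚ] W))
    (h : ∀ (p q : ℤ) (v : V) (w : W), p + q = n → v ∈ gV p → w ∈ gW q → v ⊗ₜ[ℚ] w ∈ S) :
    tensorGrading gV gW n ≤ S := by
  unfold tensorGrading
  refine iSup_le ?_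
  rintro ⟨⟨p, q⟩, hpq⟩
  rintro _ ⟨x, rfl⟩
  induction x using TensorProduct.induction_on with
  | zero => simp
  | tmul v w => exact h p q _ _ hpq v.2 w.2
  | add x y hx hy => rw [map_add]; exact S.add_mem hx hy

theorem eq_of_tensorGrading {V W X : Type} [AddCommGroup V] [Module ℚ V] [AddCommGroup W]
    [Module ℚ W] [AddCommGroup X] [Module ℚ X]
    (gV : ℤ → Submodule ℚ V) (gW : ℤ → Submodule ℚ W) (n : ℤ) (f g : V ⊗[ℚ] W →ₗ[ℚ] X)
    (h : ∀ (p q : ℤ) (v : V) (w : W), p + q = n → v ∈ gV p → w ∈ gW q →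
      f (v ⊗ₜ[ℚ] w) = g (v ⊗ₜ[ℚ] w)) (x : V ⊗[ℚ] W) (hx : x ∈ tensorGrading gV gW n) :
    f x = g x :=
  tensorGrading_le gV gW n (LinearMap.eqLocus f g) h hx

end TensorGrading

section Conv

variable (C : DGCoalgebra) {B : Type} [Ring B] [Algebra ℚ B]

/-- The parity operator of a coalgebra. -/
abbrev parC : C.carrier →ₗ[ℚ] C.carrier := parityOf C.grading

theorem comul_parC (c : C.carrier) :
    C.comul (parC C c) = TensorProduct.map (parC C) (parC C) (C.comul c) := by
  induction c using DirectSum.Decomposition.inductionOn C.grading with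
  | zero => simp
  | add x y hx hy => simp [hx, hy]
  | @homogeneous n x =>
    rw [parityOf_of_mem _ x.2, map_smul]
    symm
    refine eq_of_tensorGrading C.grading C.grading n _ ((((-1 : ℚ) ^ n)) • LinearMap.id) ?_ _
      (C.comul_mem n _ x.2)
    intro p q v w hpq hv hw
    rw [TensorProduct.map_tmul, parityOf_of_mem _ hv, parityOf_of_mem _ hw,
      TensorProduct.smul_tmul_smul, ← hpq, zpow_add₀ (by norm_num)]
    rfl

/-- Convolution product. -/
def cv (f g : C.carrier →ₗ[ℚ] B) : C.carrier →ₗ[ℚ] B :=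
  (LinearMap.mul' ℚ B).comp ((TensorProduct.map f g).comp C.comul)

theorem cv_assoc (f g h : C.carrier →ₗ[ℚ] B) : cv C (cv C f g) h = cv C f (cv C g h) := by
  have h1 : cv C (cv C f g) h = ((LinearMap.mul' ℚ B).comp
      (TensorProduct.map f ((LinearMap.mul' ℚ B).comp (TensorProduct.map g h)))).comp
      ((TensorProduct.assoc ℚ C.carrier C.carrier C.carrier).toLinearMap.comp
      ((TensorProduct.map C.comul LinearMap.id).comp C.comul)) := by
    refine LinearMap.ext fun c => ?_
    simp only [cv, LinearMap.comp_apply]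
    induction C.comul c using TensorProduct.induction_on with
    | zero => simp
    | add x y hx hy => simp only [map_add, hx, hy]
    | tmul x y =>
      simp only [TensorProduct.map_tmul, LinearMap.comp_apply]
      induction C.comul x using TensorProduct.induction_on with
      | zero => simp
      | add x y hx hy => simp only [map_add, TensorProduct.add_tmul, hx, hy]
      | tmul x z => simp [mul_assoc]
  rw [h1, C.coassoc]
  refine LinearMap.ext fun c => ?_
  simp only [cv, LinearMap.comp_apply]
  induction C.comul c using TensorProduct.induction_on with
  | zero => simp
  | add x y hx hy => simp only [map_add, hx, hy]
  | tmul x y => simp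

theorem cv_comp_parC (f g : C.carrier →ₗ[ℚ] B) :
    (cv C f g).comp (parC C) = cv C (f.comp (parC C)) (g.comp (parC C)) := by
  refine LinearMap.ext fun c => ?_
  simp only [cv, LinearMap.comp_apply, comul_parC]
  rw [TensorProduct.map_comp, LinearMap.comp_apply]

theorem cv_comp_d (f g : C.carrier →ₗ[ℚ] B) :
    (cv C f g).comp C.d = cv C (f.comp C.d) g + cv C (f.comp (parC C)) (g.comp C.d) := by
  have h := C.comul_chain
  unfold cv
  rw [LinearMap.comp_assoc, LinearMap.comp_assoc, h]
  refine LinearMap.ext fun c => ?_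
  simp only [LinearMap.comp_apply, LinearMap.add_apply, map_add]
  induction C.comul c using TensorProduct.induction_on with
  | zero => simp
  | add x y hx hy =>
    simp only [map_add]
    rw [add_add_add_comm, hx, hy]
    abel
  | tmul x y => simp

theorem parC_parC : (parC C).comp (parC C) = LinearMap.id :=
  LinearMap.ext fun c => parityOf_parityOf _ c

theorem parC_d : (parC C).comp C.d = - C.d.comp (parC C) :=
  LinearMap.ext fun c => parityOf_anticomm _ _ C.d C.d_mem c

theorem cv_add_left (f f' g : C.carrier →ₗ[ℚ] B) : cv C (f + f') g = cv C f g + cv C f' g := by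
  simp [cv, TensorProduct.map_add_left, LinearMap.comp_add, LinearMap.add_comp]

theorem cv_add_right (f g g' : C.carrier →ₗ[ℚ] B) : cv C f (g + g') = cv C f g + cv C f g' := by
  simp [cv, TensorProduct.map_add_right, LinearMap.comp_add, LinearMap.add_comp]

theorem cv_neg_left (f g : C.carrier →ₗ[ℚ] B) : cv C (-f) g = - cv C f g := by
  rw [eq_neg_iff_add_eq_zero, ← cv_add_left]; simp [cv]

theorem cv_neg_right (f g : C.carrier →ₗ[ℚ] B) : cv C f (-g) = - cv C f g := by
  rw [eq_neg_iff_add_eq_zero, ← cv_add_right]; simp [cv]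

/-- The second component of the twisting chain to the cofree dg algebra. -/
def tau1 (f : C.carrier →ₗ[ℚ] B) : C.carrier →ₗ[ℚ] B :=
  -(f.comp C.d) + -(cv C (f.comp (parC C)) f)

theorem tau1_twist (f : C.carrier →ₗ[ℚ] B) :
    (tau1 C f).comp C.d + (cv C ((tau1 C f).comp (parC C)) f - cv C f (tau1 C f)) = 0 := by
  have hdd : (f.comp C.d).comp C.d = 0 := by rw [LinearMap.comp_assoc, C.d_sq]; simp
  have hpd : (f.comp (parC C)).comp C.d = - (f.comp C.d).comp (parC C) := by
    rw [LinearMap.comp_assoc, parC_d, LinearMap.comp_neg, LinearMap.comp_assoc]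
  have hpp : (f.comp (parC C)).comp (parC C) = f := by
    rw [LinearMap.comp_assoc, parC_parC]; rfl
  simp only [tau1, LinearMap.add_comp, LinearMap.neg_comp, cv_comp_d, cv_comp_parC, cv_add_left,
    cv_add_right, cv_neg_left, cv_neg_right, hdd, hpd, hpp, cv_assoc]
  abel

theorem spread_conv (f g : C.carrier →ₗ[ℚ] B) (n : ℤ) (c : C.carrier) (hc : c ∈ C.grading n) :
    (cofree B).mulMap (TensorProduct.map ((spread C.grading 1 (f.prod g)).comp (parC C))
      (spread C.grading 1 (f.prod g)) (C.comul c))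
      = Finsupp.single (n - 1 - 1)
        (cv C (f.comp (parC C)) f c, cv C (g.comp (parC C)) f c - cv C f g c) := by
  let L1 : C.carrier ⊗[ℚ] C.carrier →ₗ[ℚ] (cofree B).carrier := (cofree B).mulMap.comp
    (TensorProduct.map ((spread C.grading 1 (f.prod g)).comp (parC C))
      (spread C.grading 1 (f.prod g)))
  let L2 : C.carrier ⊗[ℚ] C.carrier →ₗ[ℚ] (cofree B).carrier :=
    (Finsupp.lsingle (n - 1 - 1) : B × B →ₗ[ℚ] (ℤ →₀ B × B)).comp
     (((LinearMap.mul' ℚ B).comp (TensorProduct.map (f.comp (parC C)) f)).prod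
       ((LinearMap.mul' ℚ B).comp (TensorProduct.map (g.comp (parC C)) f)
        - (LinearMap.mul' ℚ B).comp (TensorProduct.map f g)))
  change L1 (C.comul c) = L2 (C.comul c)
  refine eq_of_tensorGrading C.grading C.grading n L1 L2 ?_ _ (C.comul_mem n c hc)
  intro p q v w hpq hv hw
  change cofMul B (spread C.grading 1 (f.prod g) (parC C v)) (spread C.grading 1 (f.prod g) w) =
    Finsupp.single (n - 1 - 1) (f (parC C v) * f w, g (parC C v) * f w - f v * g w)
  rw [parityOf_of_mem _ hv, map_smul, spread_of_mem _ _ _ hv, spread_of_mem _ _ _ hw, map_smul,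
    LinearMap.smul_apply, cofMul_single, cofMulAux_apply]
  have e : p - 1 + (q - 1) = n - 1 - 1 := by rw [← hpq]; ring
  rw [e, Finsupp.smul_single, neg_one_zpow_sub_one]
  congr 1
  ext
  · simp
  · simp [smul_smul, neg_one_zpow_mul_self, sub_eq_add_neg]

/-- The twisting chain to the cofree dg algebra determined by a linear map. -/
def cofTwist (f : C.carrier →ₗ[ℚ] B) : TwistingChain C (cofree B) where
  toFun := spread C.grading 1 (f.prod (tau1 C f))
  mem := by
    intro n x hx
    have h := spread_of_mem C.grading 1 (f.prod (tau1 C f)) hx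
    change spread C.grading 1 (f.prod (tau1 C f)) x ∈ fsGrading (B × B) (n - 1)
    rw [h]
    exact single_mem_fsGrading _ _ _
  twist := by
    refine LinearMap.ext fun c => ?_
    induction c using DirectSum.Decomposition.inductionOn C.grading with
    | zero => simp
    | add x y hx hy => rw [map_add, hx, hy, map_add]
    | @homogeneous n x =>
      have h := LinearMap.congr_fun (tau1_twist C f) x
      have h3 := spread_conv C f (tau1 C f) n x x.2
      simp only [LinearMap.add_apply, LinearMap.comp_apply] at h3 ⊢
      have h1 : cofD B (spread C.grading 1 (f.prod (tau1 C f)) x)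
          = Finsupp.single (n - 1 - 1) (tau1 C f x, 0) := by
        rw [spread_of_mem _ _ _ x.2]; exact cofD_single _ _ _
      have h2 : spread C.grading 1 (f.prod (tau1 C f)) (C.d x)
          = Finsupp.single (n - 1 - 1) (f (C.d x), tau1 C f (C.d x)) := by
        rw [spread_of_mem _ _ _ (C.d_mem _ _ x.2)]; rfl
      refine (congrArg₂ _ (congrArg₂ _ h1 h2) h3).trans ?_
      · change (Finsupp.single (n - 1 - 1) _ + Finsupp.single (n - 1 - 1) _) +
          Finsupp.single (n - 1 - 1) _ = (0 : ℤ →₀ B × B)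
        rw [← Finsupp.single_add, ← Finsupp.single_add]
        rw [Finsupp.single_eq_zero]
        ext
        · simp [tau1]
        · simpa using h

end Conv
section Free

theorem coalg_d_one (C : CoaugDGCoalgebra) : C.d C.one = 0 := by
  have h := C.d_mem 0 _ C.one_mem
  rw [C.nonneg (0 - 1) (by norm_num)] at h
  simpa using h

theorem alg_d_one (A : DGAlgebra) : A.d A.one = 0 := by
  have h := A.leibniz 0 A.one A.one A.one_mem
  rw [A.one_mul', A.mul_one', A.one_mul'] at h
  simpa using h

theorem parityOf_one (A : DGAlgebra) : parityOf A.grading A.one = A.one := by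
  rw [parityOf_of_mem _ A.one_mem]; simp

variable {C : CoaugDGCoalgebra} (Ω : CobarData C) {B : Type} [Ring B] [Algebra ℚ B]

theorem tau1_one (f : C.carrier →ₗ[ℚ] B) (h : f C.one = 0) :
    tau1 C.toDGCoalgebra f C.one = 0 := by
  simp [tau1, cv, coalg_d_one, C.comul_one, h]

/-- Existence part of the freeness of the underlying algebra of the cobar construction. -/
theorem cobar_lift (f : C.carrier →ₗ[ℚ] B) (h : f C.one = 0) :
    ∃ F : Ω.alg.carrier →ₗ[ℚ] B, F Ω.alg.one = 1 ∧
      (∀ x y, F (Ω.alg.mul x y) = F x * F y) ∧ ∀ c, F (Ω.t.toFun c) = f c := by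
  have h0 : (cofTwist C.toDGCoalgebra f).toFun C.one = 0 := by
    change spread C.grading 1 (f.prod (tau1 C.toDGCoalgebra f)) C.one = 0
    rw [spread_of_mem _ _ _ C.one_mem]
    simp [h, tau1_one f h]
  obtain ⟨F, hF, -⟩ := Ω.univ (cofree B) (cofTwist C.toDGCoalgebra f) h0
  refine ⟨(cofEv B).comp F.toLinearMap, ?_, ?_, ?_⟩
  · rw [LinearMap.comp_apply, F.map_one]
    exact cofEv_single B 0 (1, 0)
  · intro x y
    rw [LinearMap.comp_apply, F.map_mul]
    exact cofEv_mul B _ _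
  · intro c
    have h1 : F.toLinearMap (Ω.t.toFun c)
        = spread C.grading 1 (f.prod (tau1 C.toDGCoalgebra f)) c := LinearMap.congr_fun hF c
    rw [LinearMap.comp_apply, h1]
    induction c using DirectSum.Decomposition.inductionOn C.grading with
    | zero => simp
    | add x y hx hy =>
      rw [map_add, map_add, map_add, hx (LinearMap.congr_fun hF x), hy (LinearMap.congr_fun hF y)]
    | homogeneous x => rw [spread_of_mem _ _ _ x.2]; simp

/-- The dg algebra map to the cofree dg algebra induced by an algebra map. -/
def hatHom (A : DGAlgebra) (F : A.carrier →ₗ[ℚ] B) (h1 : F A.one = 1)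
    (hm : ∀ x y, F (A.mul x y) = F x * F y) : DGAlgebraHom A (cofree B) where
  toLinearMap := spread A.grading 0 (F.prod (F.comp A.d))
  mem := by
    intro n x hx
    have h := spread_of_mem A.grading 0 (F.prod (F.comp A.d)) hx
    change spread A.grading 0 (F.prod (F.comp A.d)) x ∈ fsGrading (B × B) n
    rw [h, sub_zero]
    exact single_mem_fsGrading _ _ _
  chain := by
    refine LinearMap.ext fun x => ?_
    induction x using DirectSum.Decomposition.inductionOn A.grading with
    | zero => simp
    | add x y hx hy => rw [map_add, hx, hy, map_add]
    | @homogeneous n x =>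
      change spread A.grading 0 (F.prod (F.comp A.d)) (A.d x)
        = cofD B (spread A.grading 0 (F.prod (F.comp A.d)) x)
      rw [spread_of_mem _ _ _ x.2, spread_of_mem _ _ _ (A.d_mem _ _ x.2), cofD_single]
      have hdd : A.d (A.d x) = 0 := LinearMap.congr_fun A.d_sq x
      simp [hdd]
  map_one := by
    change spread A.grading 0 (F.prod (F.comp A.d)) A.one = Finsupp.single 0 (1, 0)
    rw [spread_of_mem _ _ _ A.one_mem]
    simp [h1, alg_d_one]
  map_mul := by
    intro x y
    change spread A.grading 0 (F.prod (F.comp A.d)) (A.mul x y)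
        = cofMul B (spread A.grading 0 (F.prod (F.comp A.d)) x)
          (spread A.grading 0 (F.prod (F.comp A.d)) y)
    induction x using DirectSum.Decomposition.inductionOn A.grading with
    | zero => simp
    | add x y hx hy => simp only [map_add, LinearMap.add_apply, hx, hy]
    | @homogeneous n x =>
    induction y using DirectSum.Decomposition.inductionOn A.grading with
    | zero => simp
    | add x y hx hy => simp only [map_add, hx, hy]
    | @homogeneous m y =>
      rw [spread_of_mem _ _ _ x.2, spread_of_mem _ _ _ y.2,
        spread_of_mem _ _ _ (A.mul_mem _ _ _ _ x.2 y.2), cofMul_single, cofMulAux_apply]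
      simp [hm, A.leibniz n x y x.2]

theorem cofEv_hatHom (A : DGAlgebra) (F : A.carrier →ₗ[ℚ] B) (h1 : F A.one = 1)
    (hm : ∀ x y, F (A.mul x y) = F x * F y) (x : A.carrier) :
    cofEv B ((hatHom A F h1 hm).toLinearMap x) = F x := by
  change cofEv B (spread A.grading 0 (F.prod (F.comp A.d)) x) = F x
  induction x using DirectSum.Decomposition.inductionOn A.grading with
  | zero => simp
  | add x y hx hy => simp only [map_add, hx, hy]
  | homogeneous x => rw [spread_of_mem _ _ _ x.2]; simp

theorem hatHom_t (F : Ω.alg.carrier →ₗ[ℚ] B) (h1 : F Ω.alg.one = 1)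
    (hm : ∀ x y, F (Ω.alg.mul x y) = F x * F y) :
    (hatHom Ω.alg F h1 hm).toLinearMap.comp Ω.t.toFun
      = (cofTwist C.toDGCoalgebra (F.comp Ω.t.toFun)).toFun := by
  refine LinearMap.ext fun c => ?_
  change spread Ω.alg.grading 0 (F.prod (F.comp Ω.alg.d)) (Ω.t.toFun c) =
    spread C.grading 1 ((F.comp Ω.t.toFun).prod (tau1 C.toDGCoalgebra (F.comp Ω.t.toFun))) c
  induction c using DirectSum.Decomposition.inductionOn C.grading with
  | zero => simp
  | add x y hx hy => simp only [map_add, hx, hy]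
  | @homogeneous n x =>
    rw [spread_of_mem _ _ _ x.2, spread_of_mem _ _ _ (Ω.t.mem _ _ x.2), sub_zero]
    have ht := congrArg F (LinearMap.congr_fun Ω.t.twist (x : C.carrier))
    have hc : F (Ω.alg.mulMap ((TensorProduct.map (Ω.t.toFun.comp (parityOf C.grading))
        Ω.t.toFun) (C.comul x))) = cv C.toDGCoalgebra
          ((F.comp Ω.t.toFun).comp (parC C.toDGCoalgebra)) (F.comp Ω.t.toFun) x := by
      simp only [cv, LinearMap.comp_apply]
      induction C.comul x using TensorProduct.induction_on with
      | zero => simp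
      | add x y hx hy => simp only [map_add, hx, hy]
      | tmul x y => simp [DGAlgebra.mulMap, hm]
    simp only [LinearMap.add_apply, LinearMap.comp_apply, map_add, hc, LinearMap.zero_apply,
      map_zero] at ht
    have h2 : F (Ω.alg.d (Ω.t.toFun x)) = tau1 C.toDGCoalgebra (F.comp Ω.t.toFun) x := by
      simp only [tau1, LinearMap.add_apply, LinearMap.neg_apply, LinearMap.comp_apply]
      rw [← neg_add, ← add_eq_zero_iff_eq_neg, ← add_assoc]
      exact ht
    simp [h2]

/-- Uniqueness part of the freeness of the underlying algebra of the cobar construction. -/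
theorem cobar_ext (F G : Ω.alg.carrier →ₗ[ℚ] B) (hF1 : F Ω.alg.one = 1)
    (hFm : ∀ x y, F (Ω.alg.mul x y) = F x * F y) (hG1 : G Ω.alg.one = 1)
    (hGm : ∀ x y, G (Ω.alg.mul x y) = G x * G y)
    (h : ∀ c, F (Ω.t.toFun c) = G (Ω.t.toFun c)) : F = G := by
  have hFG : F.comp Ω.t.toFun = G.comp Ω.t.toFun := LinearMap.ext h
  have h0 : (cofTwist C.toDGCoalgebra (F.comp Ω.t.toFun)).toFun C.one = 0 := by
    change spread C.grading 1 ((F.comp Ω.t.toFun).prod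
      (tau1 C.toDGCoalgebra (F.comp Ω.t.toFun))) C.one = 0
    have hf : (F.comp Ω.t.toFun) C.one = 0 := by simp [Ω.t_one]
    have hp : (F.comp Ω.t.toFun).prod (tau1 C.toDGCoalgebra (F.comp Ω.t.toFun)) C.one = 0 :=
      Prod.ext hf (tau1_one _ hf)
    rw [spread_of_mem _ _ _ C.one_mem, hp, Finsupp.single_zero]
  have hu := (Ω.univ (cofree B) _ h0).unique (hatHom_t Ω F hF1 hFm)
    ((hatHom_t Ω G hG1 hGm).trans (by rw [hFG]))
  refine LinearMap.ext fun x => ?_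
  rw [← cofEv_hatHom Ω.alg F hF1 hFm, ← cofEv_hatHom Ω.alg G hG1 hGm, hu]

/-- The underlying ring of a dg algebra. -/
@[reducible] def algRing (A : DGAlgebra) : Ring A.carrier :=
  { A.isAddCommGroup with
    mul := fun x y => A.mul x y
    one := A.one
    mul_assoc := A.mul_assoc'
    one_mul := A.one_mul'
    mul_one := A.mul_one'
    left_distrib := fun x y z => map_add (A.mul x) y z
    right_distrib := fun x y z => LinearMap.map_add₂ A.mul x y z
    zero_mul := fun x => LinearMap.map_zero₂ A.mul x
    mul_zero := fun x => map_zero (A.mul x) }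

/-- The underlying algebra of a dg algebra. -/
@[reducible] def algAlgebra (A : DGAlgebra) : @Algebra ℚ A.carrier _ (algRing A).toSemiring :=
  letI := algRing A
  @Algebra.ofModule ℚ A.carrier _ (algRing A).toSemiring A.isModule
    (fun r x y => LinearMap.map_smul₂ A.mul r x y) (fun r x y => map_smul (A.mul x) r y)

/-- The cobar construction is generated by the image of the universal twisting chain. -/
theorem cobar_induction (P : Ω.alg.carrier → Prop) (ht : ∀ c, P (Ω.t.toFun c))
    (h1 : P Ω.alg.one) (hs : ∀ (r : ℚ) x, P x → P (r • x)) (ha : ∀ x y, P x → P y → P (x + y))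
    (hm : ∀ x y, P x → P y → P (Ω.alg.mul x y)) (a : Ω.alg.carrier) : P a := by
  let _ := algRing Ω.alg
  let _ := algAlgebra Ω.alg
  let S : Subalgebra ℚ Ω.alg.carrier :=
    { carrier := {x | P x}
      mul_mem' := fun {x y} hx hy => hm x y hx hy
      add_mem' := fun {x y} hx hy => ha x y hx hy
      algebraMap_mem' := fun r => hs r _ h1 }
  obtain ⟨F, hF1, hFm, hFt⟩ := cobar_lift (B := S) Ω
    (LinearMap.codRestrict (Subalgebra.toSubmodule S) Ω.t.toFun ht)
    (Subtype.ext Ω.t_one)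
  have := cobar_ext (B := Ω.alg.carrier) Ω (S.val.toLinearMap.comp F) LinearMap.id
    (by rw [LinearMap.comp_apply, hF1]; rfl)
    (by intro x y; rw [LinearMap.comp_apply, hFm]; rfl)
    rfl (fun x y => rfl)
    (by intro c; rw [LinearMap.comp_apply, hFt]; rfl)
  have h := LinearMap.congr_fun this a
  rw [LinearMap.id_apply] at h
  rw [← h]
  exact (F a).2

end Free
section Exactness

theorem parityOf_mul (A : DGAlgebra) (x y : A.carrier) :
    parityOf A.grading (A.mul x y) = A.mul (parityOf A.grading x) (parityOf A.grading y) := by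
  induction x using DirectSum.Decomposition.inductionOn A.grading with
  | zero => simp
  | add x y hx hy => simp only [map_add, LinearMap.add_apply, hx, hy]
  | @homogeneous n x =>
  induction y using DirectSum.Decomposition.inductionOn A.grading with
  | zero => simp
  | add x y hx hy => simp only [map_add, hx, hy]
  | @homogeneous m y =>
    rw [parityOf_of_mem _ x.2, parityOf_of_mem _ y.2,
      parityOf_of_mem _ (A.mul_mem _ _ _ _ x.2 y.2), zpow_add₀ (by norm_num)]
    simp [smul_smul, mul_comm]

theorem alg_leibniz (A : DGAlgebra) (x y : A.carrier) :
    A.d (A.mul x y) = A.mul (A.d x) y + A.mul (parityOf A.grading x) (A.d y) := by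
  induction x using DirectSum.Decomposition.inductionOn A.grading with
  | zero => simp
  | add x y hx hy => simp only [map_add, LinearMap.add_apply, hx, hy]; abel
  | homogeneous x => rw [A.leibniz _ _ _ x.2, parityOf_of_mem _ x.2]; simp

theorem mod_leibniz {A : DGAlgebra} (M : DGModule A) (a : A.carrier) (x : M.carrier) :
    M.d (M.smul a x) = M.smul (A.d a) x + M.smul (parityOf A.grading a) (M.d x) := by
  induction a using DirectSum.Decomposition.inductionOn A.grading with
  | zero => simp
  | add x y hx hy => simp only [map_add, LinearMap.add_apply, hx, hy]; abel
  | homogeneous x => rw [M.leibniz _ _ _ x.2, parityOf_of_mem _ x.2]; simp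

variable {C : CoaugDGCoalgebra} (Ω : CobarData C) (M : DGModule Ω.alg)

/-- The parity operator of the cobar construction. -/
abbrev parA : Ω.alg.carrier →ₗ[ℚ] Ω.alg.carrier := parityOf Ω.alg.grading

/-- The projection `a ⊗ c ⊗ m ↦ ε(c) a ⊗ m`. -/
def pZero : Ω.alg.carrier ⊗[ℚ] (C.carrier ⊗[ℚ] M.carrier) →ₗ[ℚ] Ω.alg.carrier ⊗[ℚ] M.carrier :=
  TensorProduct.map LinearMap.id ((TensorProduct.lid ℚ M.carrier).toLinearMap.comp
      (TensorProduct.map C.counit LinearMap.id))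

theorem pZero_tmul (a : Ω.alg.carrier) (c : C.carrier) (m : M.carrier) :
    pZero Ω M (a ⊗ₜ (c ⊗ₜ m)) = a ⊗ₜ (C.counit c • m) := by simp [pZero]

/-- The component `a ⊗ c ⊗ m ↦ (-1)^{|a|} (a ⊗ tc·m - a·tc ⊗ m)` of the differential. -/
def phiMap : Ω.alg.carrier ⊗[ℚ] (C.carrier ⊗[ℚ] M.carrier) →ₗ[ℚ]
    Ω.alg.carrier ⊗[ℚ] M.carrier :=
  TensorProduct.map (parA Ω) (M.actionMap.comp (TensorProduct.map Ω.t.toFun LinearMap.id))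
  - (TensorProduct.map (Ω.alg.mulMap.comp (TensorProduct.map (parA Ω) Ω.t.toFun))
      LinearMap.id).comp
      (TensorProduct.assoc ℚ Ω.alg.carrier C.carrier M.carrier).symm.toLinearMap

theorem phiMap_tmul (a : Ω.alg.carrier) (c : C.carrier) (m : M.carrier) :
    phiMap Ω M (a ⊗ₜ (c ⊗ₜ m)) = (parA Ω a) ⊗ₜ (M.smul (Ω.t.toFun c) m)
      - (Ω.alg.mul (parA Ω a) (Ω.t.toFun c)) ⊗ₜ m := by
  simp [phiMap, DGModule.actionMap, DGAlgebra.mulMap]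

/-- The untwisted tensor product differential. -/
def dZero : Ω.alg.carrier ⊗[ℚ] M.carrier →ₗ[ℚ] Ω.alg.carrier ⊗[ℚ] M.carrier :=
  TensorProduct.map Ω.alg.d LinearMap.id + TensorProduct.map (parA Ω) M.d

theorem dZero_tmul (a : Ω.alg.carrier) (m : M.carrier) :
    dZero Ω M (a ⊗ₜ m) = (Ω.alg.d a) ⊗ₜ m + (parA Ω a) ⊗ₜ (M.d m) := by
  simp [dZero]

/-- Left multiplication on the first factor. -/
def lMul (Y : Type) [AddCommGroup Y] [Module ℚ Y] :
    Ω.alg.carrier →ₗ[ℚ] (Ω.alg.carrier ⊗[ℚ] Y →ₗ[ℚ] Ω.alg.carrier ⊗[ℚ] Y) :=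
  (LinearMap.rTensorHom Y).comp Ω.alg.mul

theorem lMul_tmul (Y : Type) [AddCommGroup Y] [Module ℚ Y] (a b : Ω.alg.carrier) (y : Y) :
    lMul Ω Y a (b ⊗ₜ y) = (Ω.alg.mul a b) ⊗ₜ y := rfl

theorem lMul_mul (Y : Type) [AddCommGroup Y] [Module ℚ Y] (a b : Ω.alg.carrier)
    (u : Ω.alg.carrier ⊗[ℚ] Y) :
    lMul Ω Y (Ω.alg.mul a b) u = lMul Ω Y a (lMul Ω Y b u) := by
  induction u using TensorProduct.induction_on with
  | zero => simp
  | add x y hx hy => simp only [map_add, hx, hy]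
  | tmul x y => simp only [lMul_tmul, Ω.alg.mul_assoc']

theorem lMul_one (Y : Type) [AddCommGroup Y] [Module ℚ Y] (u : Ω.alg.carrier ⊗[ℚ] Y) :
    lMul Ω Y Ω.alg.one u = u := by
  induction u using TensorProduct.induction_on with
  | zero => simp
  | add x y hx hy => simp only [map_add, hx, hy]
  | tmul x y => simp only [lMul_tmul, Ω.alg.one_mul']

/-- Induction on pure triple tensors. -/
theorem triple_induction {X Y Z : Type} [AddCommGroup X] [Module ℚ X] [AddCommGroup Y]
    [Module ℚ Y] [AddCommGroup Z] [Module ℚ Z] {W : Type} [AddCommGroup W] [Module ℚ W]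
    {f g : X ⊗[ℚ] (Y ⊗[ℚ] Z) →ₗ[ℚ] W}
    (h : ∀ x y z, f (x ⊗ₜ (y ⊗ₜ z)) = g (x ⊗ₜ (y ⊗ₜ z))) (u : X ⊗[ℚ] (Y ⊗[ℚ] Z)) :
    f u = g u := by
  induction u using TensorProduct.induction_on with
  | zero => simp
  | add x y hx hy => simp only [map_add, hx, hy]
  | tmul x y =>
    induction y using TensorProduct.induction_on with
    | zero => simp
    | add x y hx hy => simp only [map_add, TensorProduct.tmul_add, hx, hy]
    | tmul y z => exact h x y z

theorem pZero_lMul (a : Ω.alg.carrier) (u : Ω.alg.carrier ⊗[ℚ] (C.carrier ⊗[ℚ] M.carrier)) :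
    pZero Ω M (lMul Ω _ a u) = lMul Ω _ a (pZero Ω M u) := by
  refine triple_induction (f := (pZero Ω M).comp (lMul Ω _ a))
    (g := (lMul Ω _ a).comp (pZero Ω M)) ?_ u
  intro x y z
  simp only [LinearMap.comp_apply, lMul_tmul, pZero_tmul]

theorem phiMap_lMul (a : Ω.alg.carrier) (u : Ω.alg.carrier ⊗[ℚ] (C.carrier ⊗[ℚ] M.carrier)) :
    phiMap Ω M (lMul Ω _ a u) = lMul Ω _ (parA Ω a) (phiMap Ω M u) := by
  refine triple_induction (f := (phiMap Ω M).comp (lMul Ω _ a))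
    (g := (lMul Ω _ (parA Ω a)).comp (phiMap Ω M)) ?_ u
  intro x y z
  simp only [LinearMap.comp_apply, lMul_tmul, phiMap_tmul, map_sub, parityOf_mul,
    Ω.alg.mul_assoc']

/-- The reduced part of an element of the coalgebra. -/
def redC : C.carrier →ₗ[ℚ] C.carrier :=
  LinearMap.id - (LinearMap.toSpanSingleton ℚ C.carrier C.one).comp C.counit

theorem redC_apply (c : C.carrier) : redC (C := C) c = c - C.counit c • C.one := rfl

theorem counit_redC (c : C.carrier) : C.counit (redC (C := C) c) = 0 := by
  simp [redC_apply, C.counit_one]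

theorem t_redC (c : C.carrier) : Ω.t.toFun (redC (C := C) c) = Ω.t.toFun c := by
  simp [redC_apply, Ω.t_one]

theorem exact_middle (v : Ω.alg.carrier ⊗[ℚ] M.carrier) :
    ∃ z, pZero Ω M z = 0 ∧ phiMap Ω M z = v - Ω.alg.one ⊗ₜ (M.actionMap v) := by
  let R : Submodule ℚ (Ω.alg.carrier ⊗[ℚ] M.carrier) :=
    Submodule.map (phiMap Ω M) (LinearMap.ker (pZero Ω M))
  have hL : ∀ a, ∀ r ∈ R, lMul Ω _ a r ∈ R := by
    rintro a _ ⟨z, hz, rfl⟩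
    refine ⟨lMul Ω _ (parA Ω a) z, ?_, ?_⟩
    · have hz' : pZero Ω M z = 0 := hz
      change pZero Ω M (lMul Ω _ (parA Ω a) z) = 0
      rw [pZero_lMul, hz', map_zero]
    · rw [phiMap_lMul, parityOf_parityOf]
  have key : ∀ a : Ω.alg.carrier, ∀ m : M.carrier,
      a ⊗ₜ[ℚ] m - Ω.alg.one ⊗ₜ[ℚ] (M.smul a m) ∈ R := by
    intro a
    refine cobar_induction Ω
      (fun a => ∀ m : M.carrier, a ⊗ₜ[ℚ] m - Ω.alg.one ⊗ₜ[ℚ] (M.smul a m) ∈ R) ?_ ?_ ?_ ?_ ?_ a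
    · intro c m
      refine ⟨-(Ω.alg.one ⊗ₜ (redC (C := C) c ⊗ₜ m)), ?_, ?_⟩
      · change pZero Ω M _ = 0
        rw [map_neg, pZero_tmul, counit_redC]
        simp
      · rw [map_neg, phiMap_tmul, t_redC, parityOf_one, Ω.alg.one_mul']
        abel
    · intro m
      rw [M.one_smul', sub_self]
      exact R.zero_mem
    · intro r x hx m
      have := R.smul_mem r (hx m)
      simpa [smul_sub, TensorProduct.smul_tmul'] using this
    · intro x y hx hy m
      have := R.add_mem (hx m) (hy m)
      rw [map_add, LinearMap.add_apply, TensorProduct.tmul_add, TensorProduct.add_tmul,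
        add_sub_add_comm]
      exact this
    · intro x y hx hy m
      have h1 := hL x _ (hy m)
      rw [map_sub, lMul_tmul, lMul_tmul, Ω.alg.mul_one'] at h1
      have := R.add_mem h1 (hx (M.smul y m))
      rwa [sub_add_sub_cancel, ← M.mul_smul'] at this
  have : v - Ω.alg.one ⊗ₜ (M.actionMap v) ∈ R := by
    induction v using TensorProduct.induction_on with
    | zero => simp
    | add x y hx hy =>
      rw [map_add, TensorProduct.tmul_add, add_sub_add_comm]
      exact R.add_mem hx hy
    | tmul a m => exact key a m
  obtain ⟨z, hz, hz'⟩ := this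
  exact ⟨z, hz, hz'⟩

/-- The matrices used to split `phiMap`. -/
def splitGen : C.carrier →ₗ[ℚ]
    Module.End ℚ (M.carrier × (Ω.alg.carrier ⊗[ℚ] (C.carrier ⊗[ℚ] M.carrier))) where
  toFun c := ((M.smul (Ω.t.toFun c)).comp (LinearMap.fst ℚ _ _)).prod
    ((lMul Ω _ (Ω.t.toFun c)).comp (LinearMap.snd ℚ _ _)
      + ((TensorProduct.mk ℚ _ _ Ω.alg.one).comp
        (TensorProduct.mk ℚ _ _ (redC (C := C) c))).comp (LinearMap.fst ℚ _ _))
  map_add' x y := by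
    refine LinearMap.ext fun p => Prod.ext ?_ ?_
    · simp
    · simp [TensorProduct.tmul_add]; abel
  map_smul' r x := by
    refine LinearMap.ext fun p => Prod.ext ?_ ?_
    · simp
    · simp [TensorProduct.smul_tmul']
      rw [TensorProduct.smul_tmul r Ω.alg.one, TensorProduct.smul_tmul']

theorem splitGen_apply (c : C.carrier) (m : M.carrier)
    (u : Ω.alg.carrier ⊗[ℚ] (C.carrier ⊗[ℚ] M.carrier)) :
    splitGen Ω M c (m, u) = (M.smul (Ω.t.toFun c) m,
      lMul Ω _ (Ω.t.toFun c) u + Ω.alg.one ⊗ₜ (redC (C := C) c ⊗ₜ m)) := rfl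

theorem exists_split : ∃ s : Ω.alg.carrier →ₗ[ℚ] M.carrier →ₗ[ℚ]
      (Ω.alg.carrier ⊗[ℚ] (C.carrier ⊗[ℚ] M.carrier)),
    (∀ c m, s (Ω.t.toFun c) m = Ω.alg.one ⊗ₜ (redC (C := C) c ⊗ₜ m)) ∧
    (∀ a b m, s (Ω.alg.mul a b) m = lMul Ω _ a (s b m) + s a (M.smul b m)) := by
  have h0 : splitGen Ω M C.one = 0 := by
    refine LinearMap.ext fun p => ?_
    obtain ⟨m, u⟩ := p
    rw [splitGen_apply, Ω.t_one, redC_apply, C.counit_one]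
    simp
  obtain ⟨F, hF1, hFm, hFt⟩ := cobar_lift Ω (splitGen Ω M) h0
  have hF : ∀ a m u, F a (m, u) = (M.smul a m, lMul Ω _ a u + (F a (m, 0)).2) := by
    intro a
    refine cobar_induction Ω
      (fun a => ∀ m u, F a (m, u) = (M.smul a m, lMul Ω _ a u + (F a (m, 0)).2)) ?_ ?_ ?_ ?_ ?_ a
    · intro c m u
      rw [hFt, splitGen_apply, splitGen_apply, map_zero, zero_add]
    · intro m u
      rw [hF1, M.one_smul', lMul_one]
      simp
    · intro r x hx m u
      rw [map_smul, LinearMap.smul_apply, hx m u, map_smul, map_smul]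
      simp
    · intro x y hx hy m u
      rw [map_add, LinearMap.add_apply, hx m u, hy m u, map_add, map_add]
      refine Prod.ext ?_ ?_
      · simp
      · simp; abel
    · intro x y hx hy m u
      rw [hFm, Module.End.mul_apply, Module.End.mul_apply, hy m u, hx, hy m 0,
        hx _ (lMul Ω _ y 0 + _), M.mul_smul', lMul_mul]
      simp [add_assoc]
  refine ⟨LinearMap.mk₂ ℚ (fun a m => (F a (m, 0)).2) ?_ ?_ ?_ ?_, ?_, ?_⟩
  · intro a b m; simp
  · intro r a m; simp
  · intro a m m'
    rw [← Prod.snd_add, ← map_add]; simp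
  · intro r a m
    rw [← Prod.smul_snd, ← map_smul]; simp
  · intro c m
    rw [LinearMap.mk₂_apply, hFt, splitGen_apply, map_zero, zero_add]
  · intro a b m
    simp only [LinearMap.mk₂_apply]
    rw [hFm, Module.End.mul_apply, hF b m 0, hF a]

theorem exact_left (u : Ω.alg.carrier ⊗[ℚ] (C.carrier ⊗[ℚ] M.carrier))
    (h0 : pZero Ω M u = 0) (h1 : phiMap Ω M u = 0) : u = 0 := by
  obtain ⟨s, hs, hm⟩ := exists_split Ω M
  let Q : Ω.alg.carrier ⊗[ℚ] (C.carrier ⊗[ℚ] M.carrier) →ₗ[ℚ]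
    Ω.alg.carrier ⊗[ℚ] (C.carrier ⊗[ℚ] M.carrier) := TensorProduct.map (parA Ω) LinearMap.id
  let J : Ω.alg.carrier ⊗[ℚ] M.carrier →ₗ[ℚ]
    Ω.alg.carrier ⊗[ℚ] (C.carrier ⊗[ℚ] M.carrier) :=
      TensorProduct.map (parA Ω) (TensorProduct.mk ℚ _ _ C.one)
  have key : Q u = ((J.comp (pZero Ω M)) - (TensorProduct.lift s).comp (phiMap Ω M)) u := by
    refine triple_induction ?_ u
    intro a c m
    simp only [LinearMap.sub_apply, LinearMap.comp_apply, pZero_tmul, phiMap_tmul, map_sub,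
      TensorProduct.lift.tmul, hm, hs, lMul_tmul, Ω.alg.mul_one', Q, J, TensorProduct.map_tmul,
      LinearMap.id_apply, redC_apply, TensorProduct.sub_tmul, TensorProduct.tmul_sub,
      TensorProduct.mk_apply, TensorProduct.smul_tmul]
    abel
  have hQ : Q u = 0 := by rw [key]; simp [h0, h1]
  have hQQ : Q (Q u) = u := by
    refine triple_induction (f := Q.comp Q) (g := LinearMap.id) ?_ u
    intro a c m
    simp [Q, parityOf_parityOf]
  rw [← hQQ, hQ, map_zero]

end Exactness
section Main

variable {C : CoaugDGCoalgebra} (Ω : CobarData C) (M : DGModule Ω.alg)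

/-- The differential of `ΩC ⊗_t (C ⊗^t M)`. -/
abbrev totD : Ω.alg.carrier ⊗[ℚ] (C.carrier ⊗[ℚ] M.carrier) →ₗ[ℚ]
    Ω.alg.carrier ⊗[ℚ] (C.carrier ⊗[ℚ] M.carrier) :=
  extDiff C.toDGCoalgebra Ω.alg Ω.t (C.carrier ⊗[ℚ] M.carrier)
        (coextDiff C.toDGCoalgebra Ω.alg Ω.t M.carrier M.d M.actionMap)
        (coextCoact C.toDGCoalgebra M.carrier)

/-- The twisting term on the right: `(c₀ ⊗ c₁) ↦ Pa ⊗ Pc₀ ⊗ t(c₁) m`. -/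
def twR (a : Ω.alg.carrier) (m : M.carrier) : C.carrier ⊗[ℚ] C.carrier →ₗ[ℚ]
    Ω.alg.carrier ⊗[ℚ] (C.carrier ⊗[ℚ] M.carrier) :=
  (TensorProduct.mk ℚ _ _ (parA Ω a)).comp
    (TensorProduct.map (parC C.toDGCoalgebra) ((M.smul.flip m).comp Ω.t.toFun))

/-- The twisting term on the left: `(c₀ ⊗ c₁) ↦ Pa t(c₀) ⊗ c₁ ⊗ m`. -/
def twL (a : Ω.alg.carrier) (m : M.carrier) : C.carrier ⊗[ℚ] C.carrier →ₗ[ℚ]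
    Ω.alg.carrier ⊗[ℚ] (C.carrier ⊗[ℚ] M.carrier) :=
  TensorProduct.map ((Ω.alg.mul (parA Ω a)).comp Ω.t.toFun)
    ((TensorProduct.mk ℚ C.carrier M.carrier).flip m)

theorem totD_tmul (a : Ω.alg.carrier) (c : C.carrier) (m : M.carrier) :
    totD Ω M (a ⊗ₜ (c ⊗ₜ m)) = (Ω.alg.d a) ⊗ₜ (c ⊗ₜ m)
      + ((parA Ω a) ⊗ₜ (C.d c ⊗ₜ m) + (parA Ω a) ⊗ₜ (parC C.toDGCoalgebra c ⊗ₜ M.d m)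
      + twR Ω M a m (C.comul c)) - twL Ω M a m (C.comul c) := by
  have hR : (parA Ω a) ⊗ₜ (TensorProduct.map (parC C.toDGCoalgebra)
      (M.actionMap.comp (TensorProduct.map Ω.t.toFun LinearMap.id))
      (TensorProduct.assoc ℚ C.carrier C.carrier M.carrier (C.comul c ⊗ₜ m)))
      = twR Ω M a m (C.comul c) := by
    induction C.comul c using TensorProduct.induction_on with
    | zero => simp
    | add x y hx hy => simp only [map_add, TensorProduct.add_tmul, TensorProduct.tmul_add, hx, hy]
    | tmul x y => simp [twR, DGModule.actionMap]
  have hL : (TensorProduct.map (Ω.alg.mulMap.comp (TensorProduct.map (parA Ω) Ω.t.toFun))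
      (LinearMap.id : C.carrier ⊗[ℚ] M.carrier →ₗ[ℚ] C.carrier ⊗[ℚ] M.carrier))
      ((TensorProduct.assoc ℚ Ω.alg.carrier C.carrier (C.carrier ⊗[ℚ] M.carrier)).symm
        (a ⊗ₜ (TensorProduct.assoc ℚ C.carrier C.carrier M.carrier (C.comul c ⊗ₜ m))))
      = twL Ω M a m (C.comul c) := by
    induction C.comul c using TensorProduct.induction_on with
    | zero => simp
    | add x y hx hy => simp only [map_add, TensorProduct.add_tmul, TensorProduct.tmul_add, hx, hy]
    | tmul x y => simp [twL, DGAlgebra.mulMap]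
  rw [← hR, ← hL]
  simp only [totD, extDiff, coextDiff, coextDiffFrom, coextCoact, LinearMap.sub_apply,
    LinearMap.add_apply, LinearMap.comp_apply, TensorProduct.map_tmul, LinearMap.id_apply,
    LinearEquiv.coe_coe, TensorProduct.tmul_add]

theorem counit_parC (c : C.carrier) : C.counit (parC C.toDGCoalgebra c) = C.counit c := by
  induction c using DirectSum.Decomposition.inductionOn C.grading with
  | zero => simp
  | add x y hx hy => simp only [map_add, hx, hy]
  | @homogeneous n x =>
    rw [parityOf_of_mem _ x.2, map_smul]
    by_cases hn : n = 0
    · subst hn; simp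
    · rw [C.counit_zero n hn _ x.2]; simp

theorem pZero_twR (a : Ω.alg.carrier) (c : C.carrier) (m : M.carrier) :
    pZero Ω M (twR Ω M a m (C.comul c)) = (parA Ω a) ⊗ₜ (M.smul (Ω.t.toFun c) m) := by
  have h : c = (TensorProduct.lid ℚ C.carrier)
      (TensorProduct.map C.counit LinearMap.id (C.comul c)) :=
    (LinearMap.congr_fun C.counit_comul_left c).symm
  conv_rhs => rw [h]
  induction C.comul c using TensorProduct.induction_on with
  | zero => simp
  | add x y hx hy =>
    simp only [map_add, LinearMap.add_apply, TensorProduct.tmul_add, hx, hy]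
  | tmul x y => simp [twR, pZero_tmul, counit_parC]

theorem pZero_twL (a : Ω.alg.carrier) (c : C.carrier) (m : M.carrier) :
    pZero Ω M (twL Ω M a m (C.comul c)) = (Ω.alg.mul (parA Ω a) (Ω.t.toFun c)) ⊗ₜ m := by
  have h : c = (TensorProduct.rid ℚ C.carrier)
      (TensorProduct.map LinearMap.id C.counit (C.comul c)) :=
    (LinearMap.congr_fun C.counit_comul_right c).symm
  conv_rhs => rw [h]
  induction C.comul c using TensorProduct.induction_on with
  | zero => simp
  | add x y hx hy =>
    simp only [map_add, TensorProduct.add_tmul, hx, hy]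
  | tmul x y => simp [twL, pZero_tmul, TensorProduct.smul_tmul']

theorem pZero_totD (u : Ω.alg.carrier ⊗[ℚ] (C.carrier ⊗[ℚ] M.carrier)) :
    pZero Ω M (totD Ω M u) = dZero Ω M (pZero Ω M u) + phiMap Ω M u := by
  refine triple_induction (f := (pZero Ω M).comp (totD Ω M))
    (g := (dZero Ω M).comp (pZero Ω M) + phiMap Ω M) ?_ u
  intro a c m
  have hd : C.counit (C.d c) = 0 := LinearMap.congr_fun C.counit_chain c
  rw [LinearMap.comp_apply, totD_tmul, LinearMap.add_apply, LinearMap.comp_apply, pZero_tmul,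
    phiMap_tmul, dZero_tmul, map_sub, map_add, map_add, map_add, pZero_twR, pZero_twL,
    pZero_tmul, pZero_tmul, pZero_tmul, hd, counit_parC, map_smul]
  simp only [zero_smul, TensorProduct.tmul_zero, zero_add]
  abel

theorem phiMap_tw (a : Ω.alg.carrier) (m : M.carrier) (w : C.carrier ⊗[ℚ] C.carrier) :
    phiMap Ω M (twR Ω M a m w) - phiMap Ω M (twL Ω M a m w)
      = a ⊗ₜ (M.smul (Ω.alg.mulMap ((TensorProduct.map
          (Ω.t.toFun.comp (parityOf C.grading)) Ω.t.toFun) w)) m)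
        - (Ω.alg.mul a (Ω.alg.mulMap ((TensorProduct.map
          (Ω.t.toFun.comp (parityOf C.grading)) Ω.t.toFun) w))) ⊗ₜ m := by
  induction w using TensorProduct.induction_on with
  | zero => simp
  | add x y hx hy =>
    simp only [map_add, LinearMap.add_apply, TensorProduct.tmul_add, TensorProduct.add_tmul]
    rw [add_sub_add_comm, hx, hy]
    abel
  | tmul x y =>
    have hPt : parA Ω (Ω.t.toFun x) = - Ω.t.toFun (parityOf C.grading x) :=
      parityOf_anticomm C.grading Ω.alg.grading Ω.t.toFun Ω.t.mem x
    simp only [twR, twL, LinearMap.comp_apply, TensorProduct.map_tmul, TensorProduct.mk_apply,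
      LinearMap.flip_apply, phiMap_tmul, parityOf_mul, parityOf_parityOf, hPt, DGAlgebra.mulMap,
      TensorProduct.lift.tmul, M.mul_smul', map_neg, LinearMap.neg_apply, Ω.alg.mul_assoc',
      TensorProduct.neg_tmul]
    abel

theorem phiMap_totD (u : Ω.alg.carrier ⊗[ℚ] (C.carrier ⊗[ℚ] M.carrier)) :
    phiMap Ω M (totD Ω M u) = - dZero Ω M (phiMap Ω M u) := by
  refine triple_induction (f := (phiMap Ω M).comp (totD Ω M))
    (g := -(dZero Ω M).comp (phiMap Ω M)) ?_ u
  intro a c m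
  have hPt : parA Ω (Ω.t.toFun c) = - Ω.t.toFun (parityOf C.grading c) :=
    parityOf_anticomm C.grading Ω.alg.grading Ω.t.toFun Ω.t.mem c
  have hPd : parA Ω (Ω.alg.d a) = - Ω.alg.d (parA Ω a) :=
    parityOf_anticomm Ω.alg.grading Ω.alg.grading Ω.alg.d Ω.alg.d_mem a
  have ht := LinearMap.congr_fun Ω.t.twist c
  simp only [LinearMap.add_apply, LinearMap.comp_apply, LinearMap.zero_apply] at ht
  have htw := phiMap_tw Ω M a m (C.comul c)
  rw [← neg_eq_iff_add_eq_zero] at ht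
  rw [← ht] at htw
  rw [LinearMap.comp_apply, totD_tmul, LinearMap.neg_apply, LinearMap.comp_apply, map_sub, map_add,
    map_add, add_sub_assoc, add_sub_assoc, htw]
  simp only [map_add, phiMap_tmul, map_sub, dZero_tmul, alg_leibniz, mod_leibniz, parityOf_mul,
    parityOf_parityOf, hPt, hPd, map_neg, LinearMap.neg_apply, LinearMap.add_apply,
    TensorProduct.neg_tmul, TensorProduct.tmul_neg, TensorProduct.add_tmul,
    TensorProduct.tmul_add]
  abel

theorem cobarCounit_eq (u : Ω.alg.carrier ⊗[ℚ] (C.carrier ⊗[ℚ] M.carrier)) :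
    cobarCounit C Ω M u = M.actionMap (pZero Ω M u) := rfl

theorem dZero_one (m : M.carrier) :
    dZero Ω M (Ω.alg.one ⊗ₜ m) = Ω.alg.one ⊗ₜ (M.d m) := by
  rw [dZero_tmul, alg_d_one, parityOf_one]; simp

theorem phiMap_one (m : M.carrier) :
    phiMap Ω M (Ω.alg.one ⊗ₜ (C.one ⊗ₜ m)) = 0 := by
  rw [phiMap_tmul, Ω.t_one]; simp

theorem pZero_one (m : M.carrier) :
    pZero Ω M (Ω.alg.one ⊗ₜ (C.one ⊗ₜ m)) = Ω.alg.one ⊗ₜ m := by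
  rw [pZero_tmul, C.counit_one, one_smul]

theorem actionMap_one (m : M.carrier) : M.actionMap (Ω.alg.one ⊗ₜ m) = m := M.one_smul' m

theorem counit_quasiIso : IsQuasiIso (totD Ω M) M.d (cobarCounit C Ω M) := by
  have hdd : ∀ m, M.d (M.d m) = 0 := fun m => LinearMap.congr_fun M.d_sq m
  constructor
  · rintro x hx ⟨y, hy⟩
    rw [cobarCounit_eq] at hy
    obtain ⟨z, hz0, hz1⟩ := exact_middle Ω M (pZero Ω M x)
    rw [hy] at hz1
    let w := Ω.alg.one ⊗ₜ[ℚ] (C.one ⊗ₜ[ℚ] y)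
    have hw0 : pZero Ω M (totD Ω M w) = Ω.alg.one ⊗ₜ (M.d y) := by
      rw [pZero_totD, phiMap_one, pZero_one, dZero_one, add_zero]
    have hw1 : phiMap Ω M (totD Ω M w) = 0 := by
      rw [phiMap_totD, phiMap_one, map_zero, neg_zero]
    have hx1 : dZero Ω M (pZero Ω M x) + phiMap Ω M x = 0 := by
      rw [← pZero_totD, hx, map_zero]
    refine ⟨w + z, ?_⟩
    rw [← sub_eq_zero]
    refine exact_left Ω M _ ?_ ?_
    · rw [map_sub, map_add, map_add, hw0, pZero_totD, hz0, hz1, map_zero]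
      abel
    · rw [map_sub, map_add, map_add, hw1, phiMap_totD, hz1, map_sub, dZero_one, hdd,
        TensorProduct.tmul_zero, sub_zero, zero_add, sub_neg_eq_add, add_comm]
      exact hx1
  · intro w hw
    refine ⟨Ω.alg.one ⊗ₜ (C.one ⊗ₜ w), ?_, 0, ?_⟩
    · refine exact_left Ω M _ ?_ ?_
      · rw [pZero_totD, phiMap_one, pZero_one, dZero_one, hw]; simp
      · rw [phiMap_totD, phiMap_one, map_zero, neg_zero]
    · rw [cobarCounit_eq, pZero_one, actionMap_one, sub_self, map_zero]

end Main

/-- For a 2-reduced cocommutative dg coalgebra `C` with universal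
twisting chain `t : C ⇝ ΩC` and any left dg `ΩC`-module `M`, the counit
`t^! t_* M = ΩC ⊗_t (C ⊗^t M) → M`, `a ⊗ c ⊗ m ↦ ε(c)·(a·m)` is a quasi-isomorphism
of `ΩC`-modules, natural in `M`. -/
theorem cobar_counit_is_quasiIso (C : CoaugDGCoalgebra) (hred : C.TwoReduced)
    (hcc : C.toDGCoalgebra.Cocomm) (Ω : CobarData C) (M : DGModule Ω.alg) :
    -- the counit is `ΩC`-linear:
    (cobarCounit C Ω M).comp (extAction Ω.alg (C.carrier ⊗[ℚ] M.carrier))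
      = M.actionMap.comp (TensorProduct.map LinearMap.id (cobarCounit C Ω M)) ∧
    -- it is a quasi-isomorphism:
    IsQuasiIso
      (extDiff C.toDGCoalgebra Ω.alg Ω.t (C.carrier ⊗[ℚ] M.carrier)
        (coextDiff C.toDGCoalgebra Ω.alg Ω.t M.carrier M.d M.actionMap)
        (coextCoact C.toDGCoalgebra M.carrier))
      M.d (cobarCounit C Ω M) ∧
    -- and it is natural in `M`:
    (∀ (M' : DGModule Ω.alg) (g : M.carrier →ₗ[ℚ] M'.carrier), IsModuleHom Ω.alg M M' g →
      g.comp (cobarCounit C Ω M)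
        = (cobarCounit C Ω M').comp
            (TensorProduct.map LinearMap.id (TensorProduct.map LinearMap.id g))) := by
  refine ⟨?_, counit_quasiIso Ω M, ?_⟩
  · refine LinearMap.ext fun u => ?_
    induction u using TensorProduct.induction_on with
    | zero => simp
    | add x y hx hy => simp only [map_add, hx, hy]
    | tmul a v =>
    induction v using TensorProduct.induction_on with
    | zero => simp
    | add x y hx hy => simp only [map_add, TensorProduct.tmul_add, hx, hy]
    | tmul b w => simp [cobarCounit, extAction, DGAlgebra.mulMap, DGModule.actionMap, M.mul_smul']
  · rintro M' g ⟨-, -, hg⟩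
    refine LinearMap.ext fun u => ?_
    refine triple_induction ?_ u
    intro a c m
    have h := LinearMap.congr_fun hg (a ⊗ₜ m)
    simp only [LinearMap.comp_apply, DGModule.actionMap, TensorProduct.lift.tmul,
      TensorProduct.map_tmul, LinearMap.id_apply] at h
    simp [cobarCounit, DGModule.actionMap, h]

end
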